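/- Let L be the logic M𝒜 with 𝒜 ⊆ {N, C, P, D, 4}, or one of the logics M5, MP5, M45, MP45, MD45, K45, KD45. Then every derivation in G_LConW extended with the multicut rule can be converted into a derivation in G_LConW (without multicut) with the same endsequent. -/

import Mathlib

/-- Monomodal formulas. -/
inductive Fm : Type
  | var : ℕ → Fm
  | bot : Fm
  | top : Fm
  | neg : Fm → Fm
  | and : Fm → Fm → Fm
  | or : Fm → Fm → Fm
  | imp : Fm → Fm → Fm
  | box : Fm → Fm

/-- Evaluation of the propositional structure of a formula under an assignment
`v` of truth values to formulas (only used on atoms, i.e. propositional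
variables and boxed formulas). -/
def evalP (v : Fm → Prop) : Fm → Prop
  | .var n => v (.var n)
  | .bot => False
  | .top => True
  | .neg A => ¬ evalP v A
  | .and A B => evalP v A ∧ evalP v B
  | .or A B => evalP v A ∨ evalP v B
  | .imp A B => evalP v A → evalP v B
  | .box A => v (.box A)

/-- `A` is an instance of a classical propositional tautology. -/
def Taut (A : Fm) : Prop := ∀ v, evalP v A

/-- A component of a (linear nested) sequent: a two-sided multiset sequent. -/
abbrev Cmp := Multiset Fm × Multiset Fm

/-- A set of additional axioms for monotone modal logic `M`, among
`C, N, P, D, T, 4, 5`. -/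
structure MAx where
  c : Bool := false
  n : Bool := false
  p : Bool := false
  d : Bool := false
  t : Bool := false
  four : Bool := false
  five : Bool := false

/-- Hilbert-style theoremhood in the extension `M𝒜` of monotone modal logic
`M` (classical propositional logic, the congruence rule and the axiom `M`)
with the axioms in `𝒜`. -/
inductive MThm (Ax : MAx) : Fm → Prop
  | taut {A} : Taut A → MThm Ax A
  | mp {A B} : MThm Ax (.imp A B) → MThm Ax A → MThm Ax B
  | cong {A B} : MThm Ax (.imp A B) → MThm Ax (.imp B A) →
      MThm Ax (.imp (.box A) (.box B))
  | axM {A B} : MThm Ax (.imp (.box (.and A B)) (.and (.box A) (.box B)))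
  | axC {A B} : Ax.c = true →
      MThm Ax (.imp (.and (.box A) (.box B)) (.box (.and A B)))
  | axN : Ax.n = true → MThm Ax (.box .top)
  | axP : Ax.p = true → MThm Ax (.neg (.box .bot))
  | axD {A} : Ax.d = true → MThm Ax (.neg (.and (.box A) (.box (.neg A))))
  | axT {A} : Ax.t = true → MThm Ax (.imp (.box A) A)
  | ax4 {A} : Ax.four = true → MThm Ax (.imp (.box A) (.box (.box A)))
  | ax5 {A} : Ax.five = true → MThm Ax (.or (.box A) (.box (.neg (.box A))))

/-- The sequent calculus `G_M𝒜ConW` for extensions of monotone modal logic,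
optionally (for `cut = true`) extended with the multicut rule: the classical
propositional sequent calculus with explicit weakening and contraction, the
rule `M` (if `C ∉ 𝒜`) or `C` (if `C ∈ 𝒜`), a rule for each further axiom in
`𝒜` (the rule `N` also being present whenever `5 ∈ 𝒜`, since `N` is derivable
in `M5`), and the required combination rules `D4`, `D5`, `CD`, `C4`, `CD4`,
`K4`, `K45`, `KD45`, each included exactly when the corresponding combination
of axioms is present. -/
inductive GM (Ax : MAx) (cut : Bool) : Multiset Fm → Multiset Fm → Prop
  | init {Γ Δ : Multiset Fm} {m : ℕ} : GM Ax cut (Fm.var m ::ₘ Γ) (Fm.var m ::ₘ Δ)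
  | botL {Γ Δ} : GM Ax cut (Fm.bot ::ₘ Γ) Δ
  | topR {Γ Δ} : GM Ax cut Γ (Fm.top ::ₘ Δ)
  | negL {Γ Δ A} : GM Ax cut Γ (A ::ₘ Δ) → GM Ax cut (Fm.neg A ::ₘ Γ) Δ
  | negR {Γ Δ A} : GM Ax cut (A ::ₘ Γ) Δ → GM Ax cut Γ (Fm.neg A ::ₘ Δ)
  | andL {Γ Δ A B} : GM Ax cut (A ::ₘ B ::ₘ Γ) Δ → GM Ax cut (Fm.and A B ::ₘ Γ) Δ
  | andR {Γ Δ A B} : GM Ax cut Γ (A ::ₘ Δ) → GM Ax cut Γ (B ::ₘ Δ) →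
      GM Ax cut Γ (Fm.and A B ::ₘ Δ)
  | orL {Γ Δ A B} : GM Ax cut (A ::ₘ Γ) Δ → GM Ax cut (B ::ₘ Γ) Δ →
      GM Ax cut (Fm.or A B ::ₘ Γ) Δ
  | orR {Γ Δ A B} : GM Ax cut Γ (A ::ₘ B ::ₘ Δ) → GM Ax cut Γ (Fm.or A B ::ₘ Δ)
  | impL {Γ Δ A B} : GM Ax cut (B ::ₘ Γ) Δ → GM Ax cut Γ (A ::ₘ Δ) →
      GM Ax cut (Fm.imp A B ::ₘ Γ) Δ
  | impR {Γ Δ A B} : GM Ax cut (A ::ₘ Γ) (B ::ₘ Δ) → GM Ax cut Γ (Fm.imp A B ::ₘ Δ)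
  | wkL {Γ Δ A} : GM Ax cut Γ Δ → GM Ax cut (A ::ₘ Γ) Δ
  | wkR {Γ Δ A} : GM Ax cut Γ Δ → GM Ax cut Γ (A ::ₘ Δ)
  | conL {Γ Δ A} : GM Ax cut (A ::ₘ A ::ₘ Γ) Δ → GM Ax cut (A ::ₘ Γ) Δ
  | conR {Γ Δ A} : GM Ax cut Γ (A ::ₘ A ::ₘ Δ) → GM Ax cut Γ (A ::ₘ Δ)
  | ruleM {A B} : Ax.c = false →
      GM Ax cut {A} {B} → GM Ax cut {Fm.box A} {Fm.box B}
  | ruleC {Γ : Multiset Fm} {A} : Ax.c = true → Γ ≠ 0 →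
      GM Ax cut Γ {A} → GM Ax cut (Γ.map Fm.box) {Fm.box A}
  | ruleN {A} : (Ax.n = true ∨ Ax.five = true) →
      GM Ax cut 0 {A} → GM Ax cut 0 {Fm.box A}
  | ruleP {A} : Ax.p = true →
      GM Ax cut {A} 0 → GM Ax cut {Fm.box A} 0
  | ruleD {A B} : Ax.d = true →
      GM Ax cut {A, B} 0 → GM Ax cut {Fm.box A, Fm.box B} 0
  | ruleT {Γ Δ A} : Ax.t = true →
      GM Ax cut (A ::ₘ Γ) Δ → GM Ax cut (Fm.box A ::ₘ Γ) Δ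
  | rule4 {A B} : Ax.four = true →
      GM Ax cut {Fm.box A} {B} → GM Ax cut {Fm.box A} {Fm.box B}
  | rule5 {A B} : Ax.five = true →
      GM Ax cut 0 {A, Fm.box B} → GM Ax cut 0 {Fm.box A, Fm.box B}
  | ruleD4 {A B} : Ax.c = false → Ax.four = true →
      (Ax.d = true ∨ (Ax.p = true ∧ Ax.five = true)) →
      GM Ax cut {A, Fm.box B} 0 → GM Ax cut {Fm.box A, Fm.box B} 0
  | ruleD5 {A B} : Ax.c = false → Ax.five = true →
      (Ax.d = true ∨ (Ax.p = true ∧ Ax.four = true)) →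
      GM Ax cut {A} {Fm.box B} → GM Ax cut {Fm.box A} {Fm.box B}
  | ruleCD {Γ : Multiset Fm} : Ax.c = true → (Ax.p = true ∨ Ax.d = true) →
      GM Ax cut Γ 0 → GM Ax cut (Γ.map Fm.box) 0
  | ruleC4 {Γ Sg : Multiset Fm} {B} : Ax.c = true → Ax.four = true →
      Γ + Sg ≠ 0 →
      GM Ax cut (Γ.map Fm.box + Sg) {B} →
      GM Ax cut (Γ.map Fm.box + Sg.map Fm.box) {Fm.box B}
  | ruleCD4 {Γ Sg : Multiset Fm} : Ax.c = true → Ax.four = true →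
      (Ax.p = true ∨ Ax.d = true) →
      GM Ax cut (Γ.map Fm.box + Sg) 0 →
      GM Ax cut (Γ.map Fm.box + Sg.map Fm.box) 0
  | ruleK4 {Γ Sg : Multiset Fm} {A} : Ax.c = true → Ax.n = true → Ax.four = true →
      GM Ax cut (Γ.map Fm.box + Sg) {A} →
      GM Ax cut (Γ.map Fm.box + Sg.map Fm.box) {Fm.box A}
  | ruleK45 {Γ Sg Δ : Multiset Fm} {A} : Ax.c = true → Ax.n = true →
      Ax.four = true → Ax.five = true →
      GM Ax cut (Γ.map Fm.box + Sg) (A ::ₘ Δ.map Fm.box) →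
      GM Ax cut (Γ.map Fm.box + Sg.map Fm.box) (Fm.box A ::ₘ Δ.map Fm.box)
  | ruleKD45 {Γ Sg Δ : Multiset Fm} : Ax.c = true → Ax.n = true →
      Ax.four = true → Ax.five = true → (Ax.p = true ∨ Ax.d = true) →
      GM Ax cut (Γ.map Fm.box + Sg) (Δ.map Fm.box) →
      GM Ax cut (Γ.map Fm.box + Sg.map Fm.box) (Δ.map Fm.box)
  | mcut {Γ Δ Sg Pp : Multiset Fm} {A} {nn mm : ℕ} : cut = true →
      1 ≤ nn → 1 ≤ mm →
      GM Ax cut Γ (Δ + Multiset.replicate nn A) →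
      GM Ax cut (Sg + Multiset.replicate mm A) Pp →
      GM Ax cut (Γ + Sg) (Δ + Pp)

/-- The additional axioms of the logic `M5`. -/
def axM5 : MAx := { five := true }
/-- The additional axioms of the logic `MP5`. -/
def axMP5 : MAx := { p := true, five := true }
/-- The additional axioms of the logic `M45`. -/
def axM45 : MAx := { four := true, five := true }
/-- The additional axioms of the logic `MP45`. -/
def axMP45 : MAx := { p := true, four := true, five := true }
/-- The additional axioms of the logic `MD45`. -/
def axMD45 : MAx := { d := true, four := true, five := true }
/-- The additional axioms of the logic `K45 = MNC45`. -/
def axK45 : MAx := { c := true, n := true, four := true, five := true }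
/-- The additional axioms of the logic `KD45 = MNCD45`. -/
def axKD45 : MAx := { c := true, n := true, d := true, four := true, five := true }


/-! ### An auxiliary cumulative calculus with a single modal rule -/

def OkN (Ax : MAx) (g s a d : ℕ) : Prop :=
  a ≤ 1 ∧ (s ≠ 0 ∨ a ≠ 0) ∧ (g ≠ 0 → Ax.four = true) ∧ (d ≠ 0 → Ax.five = true) ∧
  (a ≠ 0 → g + s = 0 → Ax.n = true ∨ Ax.five = true) ∧
  (a = 0 → Ax.p = true ∨ Ax.d = true) ∧
  (Ax.c = false → g + s + a + d ≤ 2 ∧ (a = 0 → s = 2 → Ax.d = true) ∧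
    (a = 0 → g ≠ 0 → Ax.d = true ∨ (Ax.p = true ∧ Ax.five = true)) ∧
    (a = 0 → d ≠ 0 → Ax.d = true ∨ (Ax.p = true ∧ Ax.four = true)))

def Good (Ax : MAx) : Prop :=
  Ax.t = false ∧ (Ax.five = true → (Ax.c = true → Ax.n = true ∧ Ax.four = true) ∧
    (Ax.c = false → Ax.d = true → Ax.four = true))

theorem okN_i {Ax : MAx} (hG : Good Ax) {g0 s0 a0 d0 g1 s1 a1 d1 d0' g1' s1' : ℕ}
    (h0 : OkN Ax g0 s0 a0 d0) (h1 : OkN Ax g1 s1 a1 d1) (hd : d0' < d0)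
    (hg : g1' ≤ g1) (hs : s1' ≤ s1) (hgs : g1' + s1' < g1 + s1) :
    OkN Ax (g0 + g1' + s1') s0 a0 (d0' + a1 + d1) := by
  obtain ⟨c, n, p, d, t, four, five⟩ := Ax
  unfold OkN Good at *
  cases c <;> cases n <;> cases p <;> cases d <;> cases four <;> cases five <;>
    simp at * <;> omega

theorem okN_ii {Ax : MAx} (hG : Good Ax) {g0 s0 a0 d0 g1 s1 a1 d1 d0' g1' : ℕ}
    (h0 : OkN Ax g0 s0 a0 d0) (h1 : OkN Ax g1 s1 a1 d1) (ha : a0 = 1) (hd : d0' ≤ d0)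
    (hg : g1' < g1) :
    OkN Ax (g0 + s0 + g1') s1 a1 (d0' + d1) := by
  obtain ⟨c, n, p, d, t, four, five⟩ := Ax
  unfold OkN Good at *
  cases c <;> cases n <;> cases p <;> cases d <;> cases four <;> cases five <;>
    simp at * <;> omega

set_option maxHeartbeats 2000000 in
theorem okN_iii {Ax : MAx} (hG : Good Ax)
    {g0 s0 a0 d0 g1 s1 a1 d1 d0' g1' s1' x y z : ℕ}
    (h0 : OkN Ax g0 s0 a0 d0) (h1 : OkN Ax g1 s1 a1 d1) (ha : a0 = 1)
    (hs : s1' < s1)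
    (hd : (d0' < d0 ∧ x = s1' ∧ z = a1) ∨ (d0' = d0 ∧ x = 0 ∧ z = 0))
    (hg : (g1' < g1 ∧ y = s0) ∨ (g1' = g1 ∧ y = 0)) :
    (s0 + s1' = 0 ∧ a1 = 0) ∨
    OkN Ax (g0 + g1' + x + y) (s0 + s1') a1 (d0' + d1 + z) := by
  obtain ⟨-, hne0, hg0, hd0, hn0, -, hc0⟩ := h0
  obtain ⟨ha1, hne1, hg1, hd1, hn1, hp1, hc1⟩ := h1
  obtain ⟨-, hG⟩ := hG
  subst ha
  by_cases ht : s0 + s1' = 0 ∧ a1 = 0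
  · exact .inl ht
  refine .inr ?_
  cases hc : Ax.c with
  | true =>
    have hfour : Ax.five = true → Ax.four = true := fun h => ((hG h).1 hc).2
    refine ⟨ha1, by omega, ?_, ?_, ?_, hp1, by simp [hc]⟩
    · intro h
      by_cases h1 : g0 ≠ 0
      · exact hg0 h1
      by_cases h2 : g1 ≠ 0
      · exact hg1 h2
      exact hfour (hd0 (by omega))
    · intro h
      by_cases h1 : d0 ≠ 0
      · exact hd0 h1
      exact hd1 (by omega)
    · intro h h'
      exact hn0 (by omega) (by omega)
  | false =>
    obtain ⟨hw0, -, -, -⟩ := hc0 hc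
    obtain ⟨hw1, e1, e2, e3⟩ := hc1 hc
    have hdf : Ax.five = true → Ax.d = true → Ax.four = true := fun h => (hG h).2 hc
    have c0 : (g0 = 0 ∧ s0 = 0 ∧ d0 = 0) ∨ (g0 = 1 ∧ s0 = 0 ∧ d0 = 0) ∨
        (g0 = 0 ∧ s0 = 1 ∧ d0 = 0) ∨ (g0 = 0 ∧ s0 = 0 ∧ d0 = 1) := by omega
    have c1 : (g1 = 0 ∧ s1 = 1 ∧ a1 = 0 ∧ d1 = 0) ∨ (g1 = 1 ∧ s1 = 1 ∧ a1 = 0 ∧ d1 = 0) ∨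
        (g1 = 0 ∧ s1 = 2 ∧ a1 = 0 ∧ d1 = 0) ∨ (g1 = 0 ∧ s1 = 1 ∧ a1 = 1 ∧ d1 = 0) ∨
        (g1 = 0 ∧ s1 = 1 ∧ a1 = 0 ∧ d1 = 1) := by omega
    clear hc0 hc1 hG hne0 hne1 hw0 hw1
    refine ⟨ha1, by omega, ?_, ?_, ?_, hp1, fun _ => ⟨?_, ?_, ?_, ?_⟩⟩
    all_goals
      rcases c0 with ⟨rfl, rfl, rfl⟩ | ⟨rfl, rfl, rfl⟩ | ⟨rfl, rfl, rfl⟩ | ⟨rfl, rfl, rfl⟩ <;>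
      rcases c1 with ⟨rfl, rfl, rfl, rfl⟩ | ⟨rfl, rfl, rfl, rfl⟩ | ⟨rfl, rfl, rfl, rfl⟩ |
        ⟨rfl, rfl, rfl, rfl⟩ | ⟨rfl, rfl, rfl, rfl⟩ <;>
      simp only [true_and, and_true, ne_eq, not_true_eq_false, not_false_eq_true, forall_const, false_implies] at * <;> grind

inductive HM (Ax : MAx) : Multiset Fm → Multiset Fm → Prop
  | init {Γ Δ : Multiset Fm} {m : ℕ} : Fm.var m ∈ Γ → Fm.var m ∈ Δ → HM Ax Γ Δ
  | botL {Γ Δ : Multiset Fm} : Fm.bot ∈ Γ → HM Ax Γ Δ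
  | topR {Γ Δ : Multiset Fm} : Fm.top ∈ Δ → HM Ax Γ Δ
  | negL {Γ Δ : Multiset Fm} {A} : Fm.neg A ∈ Γ → HM Ax Γ (A ::ₘ Δ) → HM Ax Γ Δ
  | negR {Γ Δ : Multiset Fm} {A} : Fm.neg A ∈ Δ → HM Ax (A ::ₘ Γ) Δ → HM Ax Γ Δ
  | andL {Γ Δ : Multiset Fm} {A B} : Fm.and A B ∈ Γ → HM Ax (A ::ₘ B ::ₘ Γ) Δ → HM Ax Γ Δ
  | andR {Γ Δ : Multiset Fm} {A B} : Fm.and A B ∈ Δ → HM Ax Γ (A ::ₘ Δ) →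
      HM Ax Γ (B ::ₘ Δ) → HM Ax Γ Δ
  | orL {Γ Δ : Multiset Fm} {A B} : Fm.or A B ∈ Γ → HM Ax (A ::ₘ Γ) Δ →
      HM Ax (B ::ₘ Γ) Δ → HM Ax Γ Δ
  | orR {Γ Δ : Multiset Fm} {A B} : Fm.or A B ∈ Δ → HM Ax Γ (A ::ₘ B ::ₘ Δ) → HM Ax Γ Δ
  | impL {Γ Δ : Multiset Fm} {A B} : Fm.imp A B ∈ Γ → HM Ax (B ::ₘ Γ) Δ →
      HM Ax Γ (A ::ₘ Δ) → HM Ax Γ Δ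
  | impR {Γ Δ : Multiset Fm} {A B} : Fm.imp A B ∈ Δ → HM Ax (A ::ₘ Γ) (B ::ₘ Δ) → HM Ax Γ Δ
  | mod {Γ Δ G S a D : Multiset Fm} :
      OkN Ax G.card S.card a.card D.card →
      HM Ax (G.map Fm.box + S) (a + D.map Fm.box) →
      G.map Fm.box ⊆ Γ → S.map Fm.box ⊆ Γ → a.map Fm.box ⊆ Δ → D.map Fm.box ⊆ Δ →
      HM Ax Γ Δ

theorem HasSubset.Subset.tr {X Y Z : Multiset Fm} (h : X ⊆ Y) (h' : Y ⊆ Z) : X ⊆ Z :=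
  fun _ hx => h' (h hx)

theorem sub_cons2 {A F : Fm} {X Y : Multiset Fm} (h : X ⊆ F ::ₘ Y) :
    A ::ₘ X ⊆ F ::ₘ A ::ₘ Y := by
  intro x hx
  have := @h x
  simp only [Multiset.mem_cons] at *
  tauto

theorem sub_cons1 {A : Fm} {X Y : Multiset Fm} (h : X ⊆ Y) : A ::ₘ X ⊆ A ::ₘ Y :=
  Multiset.cons_subset_cons h

theorem sub_r {A : Fm} {X Y : Multiset Fm} (h : X ⊆ Y) : X ⊆ A ::ₘ Y :=
  fun _ hx => Multiset.mem_cons_of_mem (h hx)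

theorem mem_ne {A F : Fm} {X Y : Multiset Fm} (h : X ⊆ F ::ₘ Y) (hA : A ∈ X) (hne : A ≠ F) :
    A ∈ Y := (Multiset.mem_cons.1 (h hA)).resolve_left hne

theorem map_sub_ne {F : Fm} {G X Y : Multiset Fm} (h : X ⊆ F ::ₘ Y)
    (hG : G.map Fm.box ⊆ X) (hne : ∀ B, F ≠ Fm.box B) : G.map Fm.box ⊆ Y := by
  intro x hx
  refine mem_ne h (hG hx) ?_
  obtain ⟨B, -, rfl⟩ := Multiset.mem_map.1 hx
  exact fun e => hne B e.symm

theorem HM.weak {Ax : MAx} {Γ Δ : Multiset Fm} (h : HM Ax Γ Δ) :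
    ∀ {Γ' Δ' : Multiset Fm}, Γ ⊆ Γ' → Δ ⊆ Δ' → HM Ax Γ' Δ' := by
  induction h with
  | init h1 h2 => intro Γ' Δ' hΓ hΔ; exact .init (hΓ h1) (hΔ h2)
  | botL h1 => intro Γ' Δ' hΓ hΔ; exact .botL (hΓ h1)
  | topR h1 => intro Γ' Δ' hΓ hΔ; exact .topR (hΔ h1)
  | negL h1 _ ih => intro Γ' Δ' hΓ hΔ; exact .negL (hΓ h1) (ih hΓ (sub_cons1 hΔ))
  | negR h1 _ ih => intro Γ' Δ' hΓ hΔ; exact .negR (hΔ h1) (ih (sub_cons1 hΓ) hΔ)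
  | andL h1 _ ih =>
    intro Γ' Δ' hΓ hΔ; exact .andL (hΓ h1) (ih (sub_cons1 (sub_cons1 hΓ)) hΔ)
  | andR h1 _ _ ih ih' =>
    intro Γ' Δ' hΓ hΔ; exact .andR (hΔ h1) (ih hΓ (sub_cons1 hΔ)) (ih' hΓ (sub_cons1 hΔ))
  | orL h1 _ _ ih ih' =>
    intro Γ' Δ' hΓ hΔ; exact .orL (hΓ h1) (ih (sub_cons1 hΓ) hΔ) (ih' (sub_cons1 hΓ) hΔ)
  | orR h1 _ ih =>
    intro Γ' Δ' hΓ hΔ; exact .orR (hΔ h1) (ih hΓ (sub_cons1 (sub_cons1 hΔ)))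
  | impL h1 _ _ ih ih' =>
    intro Γ' Δ' hΓ hΔ; exact .impL (hΓ h1) (ih (sub_cons1 hΓ) hΔ) (ih' hΓ (sub_cons1 hΔ))
  | impR h1 _ ih =>
    intro Γ' Δ' hΓ hΔ; exact .impR (hΔ h1) (ih (sub_cons1 hΓ) (sub_cons1 hΔ))
  | mod ok p a b c d _ =>
    intro Γ' Δ' hΓ hΔ
    exact .mod ok p (a.tr hΓ) (b.tr hΓ) (c.tr hΔ) (d.tr hΔ)

/-- Replacing a non-boxed formula on the right. -/
theorem HM.invR {Ax : MAx} {F : Fm} {X Y : Multiset Fm}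
    (hbox : ∀ B, F ≠ Fm.box B) (htop : F ≠ Fm.top)
    (hvar : ∀ m, F = Fm.var m → ∀ Γ' Δ', X ⊆ Γ' → Y ⊆ Δ' → Fm.var m ∈ Γ' → HM Ax Γ' Δ')
    (hneg : ∀ A, F = Fm.neg A → A ∈ X)
    (hand : ∀ A B, F = Fm.and A B → A ∈ Y ∨ B ∈ Y)
    (hor : ∀ A B, F = Fm.or A B → A ∈ Y ∧ B ∈ Y)
    (himp : ∀ A B, F = Fm.imp A B → A ∈ X ∧ B ∈ Y)
    {Γ Δ : Multiset Fm} (h : HM Ax Γ Δ) :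
    ∀ {Γ' Δ' : Multiset Fm}, X ⊆ Γ' → Y ⊆ Δ' → Γ ⊆ Γ' → Δ ⊆ F ::ₘ Δ' → HM Ax Γ' Δ' := by
  induction h with
  | @init _ _ m h1 h2 =>
    intro Γ' Δ' hX hY hΓ hΔ
    by_cases e : Fm.var m = F
    · exact hvar m e.symm _ _ hX hY (hΓ h1)
    · exact .init (hΓ h1) (mem_ne hΔ h2 e)
  | botL h1 => intro Γ' Δ' hX hY hΓ hΔ; exact .botL (hΓ h1)
  | topR h1 => intro Γ' Δ' hX hY hΓ hΔ; exact .topR (mem_ne hΔ h1 htop.symm)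
  | negL h1 _ ih =>
    intro Γ' Δ' hX hY hΓ hΔ; exact .negL (hΓ h1) (ih hX (sub_r hY) hΓ (sub_cons2 hΔ))
  | @negR _ _ A h1 _ ih =>
    intro Γ' Δ' hX hY hΓ hΔ
    by_cases e : Fm.neg A = F
    · exact ih hX hY (Multiset.cons_subset.2 ⟨hX (hneg _ e.symm), hΓ⟩) hΔ
    · exact .negR (mem_ne hΔ h1 e) (ih (sub_r hX) hY (sub_cons1 hΓ) hΔ)
  | andL h1 _ ih =>
    intro Γ' Δ' hX hY hΓ hΔ
    exact .andL (hΓ h1) (ih (sub_r (sub_r hX)) hY (sub_cons1 (sub_cons1 hΓ)) hΔ)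
  | @andR _ _ A B h1 _ _ ih ih' =>
    intro Γ' Δ' hX hY hΓ hΔ
    by_cases e : Fm.and A B = F
    · rcases hand _ _ e.symm with h | h
      · exact ih hX hY hΓ (Multiset.cons_subset.2 ⟨Multiset.mem_cons_of_mem (hY h), hΔ⟩)
      · exact ih' hX hY hΓ (Multiset.cons_subset.2 ⟨Multiset.mem_cons_of_mem (hY h), hΔ⟩)
    · exact .andR (mem_ne hΔ h1 e) (ih hX (sub_r hY) hΓ (sub_cons2 hΔ))
        (ih' hX (sub_r hY) hΓ (sub_cons2 hΔ))
  | orL h1 _ _ ih ih' =>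
    intro Γ' Δ' hX hY hΓ hΔ
    exact .orL (hΓ h1) (ih (sub_r hX) hY (sub_cons1 hΓ) hΔ) (ih' (sub_r hX) hY (sub_cons1 hΓ) hΔ)
  | @orR _ _ A B h1 _ ih =>
    intro Γ' Δ' hX hY hΓ hΔ
    by_cases e : Fm.or A B = F
    · have := hor _ _ e.symm
      exact ih hX hY hΓ (Multiset.cons_subset.2 ⟨Multiset.mem_cons_of_mem (hY this.1),
        Multiset.cons_subset.2 ⟨Multiset.mem_cons_of_mem (hY this.2), hΔ⟩⟩)
    · exact .orR (mem_ne hΔ h1 e)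
        (ih hX (sub_r (sub_r hY)) hΓ ((sub_cons1 (sub_cons2 hΔ)).tr
          (by rw [Multiset.cons_swap]; exact Multiset.Subset.refl _)))
  | impL h1 _ _ ih ih' =>
    intro Γ' Δ' hX hY hΓ hΔ
    exact .impL (hΓ h1) (ih (sub_r hX) hY (sub_cons1 hΓ) hΔ) (ih' hX (sub_r hY) hΓ (sub_cons2 hΔ))
  | @impR _ _ A B h1 _ ih =>
    intro Γ' Δ' hX hY hΓ hΔ
    by_cases e : Fm.imp A B = F
    · have := himp _ _ e.symm
      exact ih hX hY (Multiset.cons_subset.2 ⟨hX this.1, hΓ⟩)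
        (Multiset.cons_subset.2 ⟨Multiset.mem_cons_of_mem (hY this.2), hΔ⟩)
    · exact .impR (mem_ne hΔ h1 e) (ih (sub_r hX) (sub_r hY) (sub_cons1 hΓ) (sub_cons2 hΔ))
  | mod ok p a b c d _ =>
    intro Γ' Δ' hX hY hΓ hΔ
    exact .mod ok p (a.tr hΓ) (b.tr hΓ) (map_sub_ne hΔ c hbox) (map_sub_ne hΔ d hbox)

/-- Replacing a non-boxed formula on the left. -/
theorem HM.invL {Ax : MAx} {F : Fm} {X Y : Multiset Fm}
    (hbox : ∀ B, F ≠ Fm.box B) (hbot : F ≠ Fm.bot) (hvar : ∀ m, F ≠ Fm.var m)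
    (hneg : ∀ A, F = Fm.neg A → A ∈ Y)
    (hand : ∀ A B, F = Fm.and A B → A ∈ X ∧ B ∈ X)
    (hor : ∀ A B, F = Fm.or A B → A ∈ X ∨ B ∈ X)
    (himp : ∀ A B, F = Fm.imp A B → B ∈ X ∨ A ∈ Y)
    {Γ Δ : Multiset Fm} (h : HM Ax Γ Δ) :
    ∀ {Γ' Δ' : Multiset Fm}, X ⊆ Γ' → Y ⊆ Δ' → Γ ⊆ F ::ₘ Γ' → Δ ⊆ Δ' → HM Ax Γ' Δ' := by
  induction h with
  | @init _ _ m h1 h2 =>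
    intro Γ' Δ' hX hY hΓ hΔ
    exact .init (mem_ne hΓ h1 (hvar m).symm) (hΔ h2)
  | botL h1 => intro Γ' Δ' hX hY hΓ hΔ; exact .botL (mem_ne hΓ h1 hbot.symm)
  | topR h1 => intro Γ' Δ' hX hY hΓ hΔ; exact .topR (hΔ h1)
  | @negL _ _ A h1 _ ih =>
    intro Γ' Δ' hX hY hΓ hΔ
    by_cases e : Fm.neg A = F
    · exact ih hX hY hΓ (Multiset.cons_subset.2 ⟨hY (hneg _ e.symm), hΔ⟩)
    · exact .negL (mem_ne hΓ h1 e) (ih hX (sub_r hY) hΓ (sub_cons1 hΔ))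
  | negR h1 _ ih =>
    intro Γ' Δ' hX hY hΓ hΔ
    exact .negR (hΔ h1) (ih (sub_r hX) hY (sub_cons2 hΓ) hΔ)
  | @andL _ _ A B h1 _ ih =>
    intro Γ' Δ' hX hY hΓ hΔ
    by_cases e : Fm.and A B = F
    · have := hand _ _ e.symm
      exact ih hX hY (Multiset.cons_subset.2 ⟨Multiset.mem_cons_of_mem (hX this.1),
        Multiset.cons_subset.2 ⟨Multiset.mem_cons_of_mem (hX this.2), hΓ⟩⟩) hΔ
    · exact .andL (mem_ne hΓ h1 e)
        (ih (sub_r (sub_r hX)) hY ((sub_cons1 (sub_cons2 hΓ)).tr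
          (by rw [Multiset.cons_swap]; exact Multiset.Subset.refl _)) hΔ)
  | andR h1 _ _ ih ih' =>
    intro Γ' Δ' hX hY hΓ hΔ
    exact .andR (hΔ h1) (ih hX (sub_r hY) hΓ (sub_cons1 hΔ)) (ih' hX (sub_r hY) hΓ (sub_cons1 hΔ))
  | @orL _ _ A B h1 _ _ ih ih' =>
    intro Γ' Δ' hX hY hΓ hΔ
    by_cases e : Fm.or A B = F
    · rcases hor _ _ e.symm with h | h
      · exact ih hX hY (Multiset.cons_subset.2 ⟨Multiset.mem_cons_of_mem (hX h), hΓ⟩) hΔ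
      · exact ih' hX hY (Multiset.cons_subset.2 ⟨Multiset.mem_cons_of_mem (hX h), hΓ⟩) hΔ
    · exact .orL (mem_ne hΓ h1 e) (ih (sub_r hX) hY (sub_cons2 hΓ) hΔ)
        (ih' (sub_r hX) hY (sub_cons2 hΓ) hΔ)
  | orR h1 _ ih =>
    intro Γ' Δ' hX hY hΓ hΔ
    exact .orR (hΔ h1) (ih hX (sub_r (sub_r hY)) hΓ (sub_cons1 (sub_cons1 hΔ)))
  | @impL _ _ A B h1 _ _ ih ih' =>
    intro Γ' Δ' hX hY hΓ hΔ
    by_cases e : Fm.imp A B = F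
    · rcases himp _ _ e.symm with h | h
      · exact ih hX hY (Multiset.cons_subset.2 ⟨Multiset.mem_cons_of_mem (hX h), hΓ⟩) hΔ
      · exact ih' hX hY hΓ (Multiset.cons_subset.2 ⟨hY h, hΔ⟩)
    · exact .impL (mem_ne hΓ h1 e) (ih (sub_r hX) hY (sub_cons2 hΓ) hΔ)
        (ih' hX (sub_r hY) hΓ (sub_cons1 hΔ))
  | impR h1 _ ih =>
    intro Γ' Δ' hX hY hΓ hΔ
    exact .impR (hΔ h1) (ih (sub_r hX) (sub_r hY) (sub_cons2 hΓ) (sub_cons1 hΔ))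
  | mod ok p a b c d _ =>
    intro Γ' Δ' hX hY hΓ hΔ
    exact .mod ok p (map_sub_ne hΓ a hbox) (map_sub_ne hΓ b hbox) (c.tr hΔ) (d.tr hΔ)

/-- Induction on the right premiss of a cut on a boxed formula. -/
theorem HM.boxR {Ax : MAx} {B : Fm} {Γl Δl : Multiset Fm}
    (hmod : ∀ G S a D : Multiset Fm, OkN Ax G.card S.card a.card D.card →
      HM Ax (G.map Fm.box + S) (a + D.map Fm.box) →
      (∀ Γ' Δ' : Multiset Fm, Γl ⊆ Γ' → Δl ⊆ Fm.box B ::ₘ Δ' →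
        G.map Fm.box + S ⊆ Fm.box B ::ₘ Γ' → a + D.map Fm.box ⊆ Δ' → HM Ax Γ' Δ') →
      ∀ Γ' Δ' : Multiset Fm, Γl ⊆ Γ' → Δl ⊆ Fm.box B ::ₘ Δ' →
        G.map Fm.box ⊆ Fm.box B ::ₘ Γ' → S.map Fm.box ⊆ Fm.box B ::ₘ Γ' →
        a.map Fm.box ⊆ Δ' → D.map Fm.box ⊆ Δ' → HM Ax Γ' Δ')
    {Γ Δ : Multiset Fm} (h : HM Ax Γ Δ) :
    ∀ (Γ' Δ' : Multiset Fm), Γl ⊆ Γ' → Δl ⊆ Fm.box B ::ₘ Δ' →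
      Γ ⊆ Fm.box B ::ₘ Γ' → Δ ⊆ Δ' → HM Ax Γ' Δ' := by
  induction h with
  | init h1 h2 =>
    intro Γ' Δ' hX hY hΓ hΔ
    exact .init (mem_ne hΓ h1 (by simp)) (hΔ h2)
  | botL h1 => intro Γ' Δ' hX hY hΓ hΔ; exact .botL (mem_ne hΓ h1 (by simp))
  | topR h1 => intro Γ' Δ' hX hY hΓ hΔ; exact .topR (hΔ h1)
  | negL h1 _ ih =>
    intro Γ' Δ' hX hY hΓ hΔ
    exact .negL (mem_ne hΓ h1 (by simp)) (ih _ _ hX (hY.tr (sub_cons1 (sub_r fun _ h => h))) hΓ (sub_cons1 hΔ))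
  | negR h1 _ ih =>
    intro Γ' Δ' hX hY hΓ hΔ
    exact .negR (hΔ h1) (ih _ _ (sub_r hX) hY (sub_cons2 hΓ) hΔ)
  | andL h1 _ ih =>
    intro Γ' Δ' hX hY hΓ hΔ
    exact .andL (mem_ne hΓ h1 (by simp))
        (ih _ _ (sub_r (sub_r hX)) hY ((sub_cons1 (sub_cons2 hΓ)).tr
          (by rw [Multiset.cons_swap]; exact Multiset.Subset.refl _)) hΔ)
  | andR h1 _ _ ih ih' =>
    intro Γ' Δ' hX hY hΓ hΔ
    have hY' : ∀ A, Δl ⊆ Fm.box B ::ₘ A ::ₘ Δ' :=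
      fun A => hY.tr (sub_cons1 (sub_r fun _ h => h))
    exact .andR (hΔ h1) (ih _ _ hX (hY' _) hΓ (sub_cons1 hΔ)) (ih' _ _ hX (hY' _) hΓ (sub_cons1 hΔ))
  | orL h1 _ _ ih ih' =>
    intro Γ' Δ' hX hY hΓ hΔ
    exact .orL (mem_ne hΓ h1 (by simp)) (ih _ _ (sub_r hX) hY (sub_cons2 hΓ) hΔ)
        (ih' _ _ (sub_r hX) hY (sub_cons2 hΓ) hΔ)
  | orR h1 _ ih =>
    intro Γ' Δ' hX hY hΓ hΔ
    exact .orR (hΔ h1) (ih _ _ hX (hY.tr (sub_cons1 (sub_r (sub_r fun _ h => h)))) hΓ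
      (sub_cons1 (sub_cons1 hΔ)))
  | impL h1 _ _ ih ih' =>
    intro Γ' Δ' hX hY hΓ hΔ
    exact .impL (mem_ne hΓ h1 (by simp)) (ih _ _ (sub_r hX) hY (sub_cons2 hΓ) hΔ)
        (ih' _ _ hX (hY.tr (sub_cons1 (sub_r fun _ h => h))) hΓ (sub_cons1 hΔ))
  | impR h1 _ ih =>
    intro Γ' Δ' hX hY hΓ hΔ
    exact .impR (hΔ h1) (ih _ _ (sub_r hX) (hY.tr (sub_cons1 (sub_r fun _ h => h)))
      (sub_cons2 hΓ) (sub_cons1 hΔ))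
  | mod ok p a b c d ih =>
    intro Γ' Δ' hX hY hΓ hΔ
    exact hmod _ _ _ _ ok p ih _ _ hX hY (a.tr hΓ) (b.tr hΓ) (c.tr hΔ) (d.tr hΔ)

theorem HM.mod' {Ax : MAx} {Γ Δ G S a D : Multiset Fm}
    (ok : (S.card = 0 ∧ a.card = 0) ∨ OkN Ax G.card S.card a.card D.card)
    (p : HM Ax (G.map Fm.box + S) (a + D.map Fm.box))
    (h1 : G.map Fm.box ⊆ Γ) (h2 : S.map Fm.box ⊆ Γ) (h3 : a.map Fm.box ⊆ Δ)
    (h4 : D.map Fm.box ⊆ Δ) : HM Ax Γ Δ := by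
  rcases ok with ⟨hS, ha⟩ | ok
  · rw [Multiset.card_eq_zero] at hS ha
    subst hS ha
    exact p.weak (by simpa using h1) (by simpa using h4)
  · exact .mod ok p h1 h2 h3 h4

open Classical in
noncomputable def rem (B : Fm) (X : Multiset Fm) : Multiset Fm := X.filter (fun x => x ≠ B)

theorem mem_rem {B x : Fm} {X : Multiset Fm} : x ∈ rem B X ↔ x ∈ X ∧ x ≠ B := by
  simp [rem]

open Classical in
theorem card_rem_le (B : Fm) (X : Multiset Fm) : (rem B X).card ≤ X.card :=
  Multiset.card_le_card (Multiset.filter_le _ _)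

open Classical in
theorem card_rem_lt {B : Fm} {X : Multiset Fm} (h : B ∈ X) : (rem B X).card < X.card := by
  refine Multiset.card_lt_card (lt_of_le_of_ne (Multiset.filter_le _ _) ?_)
  intro e
  have : B ∈ rem B X := by
    have e' : rem B X = X := e
    rw [e']; exact h
  exact (mem_rem.1 this).2 rfl

open Classical in
theorem rem_eq {B : Fm} {X : Multiset Fm} (h : B ∉ X) : rem B X = X := by
  unfold rem
  rw [Multiset.filter_eq_self]
  rintro x hx rfl
  exact h hx

theorem map_rem_sub {B : Fm} {X Y : Multiset Fm} (h : X.map Fm.box ⊆ Fm.box B ::ₘ Y) :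
    (rem B X).map Fm.box ⊆ Y := by
  intro y hy
  obtain ⟨x, hx, rfl⟩ := Multiset.mem_map.1 hy
  rw [mem_rem] at hx
  exact mem_ne h (Multiset.mem_map_of_mem _ hx.1) (by simpa using hx.2)

theorem map_sub_rem {B : Fm} {X : Multiset Fm} :
    X.map Fm.box ⊆ Fm.box B ::ₘ (rem B X).map Fm.box := by
  intro y hy
  obtain ⟨x, hx, rfl⟩ := Multiset.mem_map.1 hy
  by_cases e : x = B
  · simp [e]
  · exact Multiset.mem_cons_of_mem (Multiset.mem_map_of_mem _ (mem_rem.2 ⟨hx, e⟩))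

theorem sub_rem {B : Fm} {X : Multiset Fm} : X ⊆ B ::ₘ rem B X := by
  intro x hx
  by_cases e : x = B
  · simp [e]
  · exact Multiset.mem_cons_of_mem (mem_rem.2 ⟨hx, e⟩)

theorem map_sub_of_not_mem {B : Fm} {X Y : Multiset Fm} (h : X.map Fm.box ⊆ Fm.box B ::ₘ Y)
    (hB : B ∉ X) : X.map Fm.box ⊆ Y := by
  have := map_rem_sub h
  rwa [rem_eq hB] at this

def CutOk (Ax : MAx) (B : Fm) : Prop :=
  ∀ Γ Δ : Multiset Fm, HM Ax Γ (B ::ₘ Δ) → HM Ax (B ::ₘ Γ) Δ → HM Ax Γ Δ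

theorem addsub_iff {X Y Z : Multiset Fm} : X + Y ⊆ Z ↔ X ⊆ Z ∧ Y ⊆ Z := by
  simp only [Multiset.subset_iff, Multiset.mem_add]
  exact ⟨fun h => ⟨fun _ hx => h (.inl hx), fun _ hx => h (.inr hx)⟩,
    fun h _ hx => hx.elim (fun h' => h.1 h') (fun h' => h.2 h')⟩

set_option maxHeartbeats 1000000 in
/-- The modal key step. -/
theorem HM.core {Ax : MAx} (hG : Good Ax) {B : Fm} (hB : CutOk Ax B)
    {G0 S0 a0 D0 G1 S1 a1 D1 : Multiset Fm}
    (ok0 : OkN Ax G0.card S0.card a0.card D0.card)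
    (ok1 : OkN Ax G1.card S1.card a1.card D1.card)
    (pL : HM Ax (G0.map Fm.box + S0) (a0 + D0.map Fm.box))
    (pR : HM Ax (G1.map Fm.box + S1) (a1 + D1.map Fm.box))
    (ihL : ∀ Sr Pr : Multiset Fm, HM Ax Sr Pr → ∀ Γ' Δ' : Multiset Fm,
      G0.map Fm.box + S0 ⊆ Γ' → a0 + D0.map Fm.box ⊆ Fm.box B ::ₘ Δ' →
      Sr ⊆ Fm.box B ::ₘ Γ' → Pr ⊆ Δ' → HM Ax Γ' Δ')
    (ihR : ∀ Γ' Δ' : Multiset Fm, G0.map Fm.box + S0.map Fm.box ⊆ Γ' →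
      a0.map Fm.box + D0.map Fm.box ⊆ Fm.box B ::ₘ Δ' →
      G1.map Fm.box + S1 ⊆ Fm.box B ::ₘ Γ' → a1 + D1.map Fm.box ⊆ Δ' → HM Ax Γ' Δ')
    (Γ' Δ' : Multiset Fm)
    (hG0 : G0.map Fm.box ⊆ Γ') (hS0 : S0.map Fm.box ⊆ Γ')
    (ha0 : a0.map Fm.box ⊆ Fm.box B ::ₘ Δ') (hD0 : D0.map Fm.box ⊆ Fm.box B ::ₘ Δ')
    (hG1 : G1.map Fm.box ⊆ Fm.box B ::ₘ Γ') (hS1 : S1.map Fm.box ⊆ Fm.box B ::ₘ Γ')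
    (ha1 : a1.map Fm.box ⊆ Δ') (hD1 : D1.map Fm.box ⊆ Δ') : HM Ax Γ' Δ' := by
  have HR : HM Ax (G1.map Fm.box + S1.map Fm.box) (a1.map Fm.box + D1.map Fm.box) :=
    .mod ok1 pR (fun _ h => Multiset.mem_add.2 (.inl h)) (fun _ h => Multiset.mem_add.2 (.inr h))
      (fun _ h => Multiset.mem_add.2 (.inl h)) (fun _ h => Multiset.mem_add.2 (.inr h))
  by_cases hR : B ∉ G1 ∧ B ∉ S1
  · exact .mod ok1 pR (map_sub_of_not_mem hG1 hR.1) (map_sub_of_not_mem hS1 hR.2) ha1 hD1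
  have hGS : (rem B G1).card + (rem B S1).card < G1.card + S1.card := by
    have l1 := card_rem_le B G1
    have l2 := card_rem_le B S1
    by_cases h1 : B ∈ G1
    · have := card_rem_lt h1; omega
    · have := card_rem_lt (not_not.1 fun h2 => hR ⟨h1, h2⟩); omega
  -- step 1: cut the left premiss against the right conclusion
  have step1 : HM Ax (G0.map Fm.box + S0 + (rem B G1).map Fm.box + (rem B S1).map Fm.box)
      (a0 + (rem B D0).map Fm.box + a1.map Fm.box + D1.map Fm.box) := by
    refine ihL _ _ HR _ _ ?_ ?_ ?_ ?_
    · intro x hx; clear * - hx; simp only [Multiset.mem_add] at *; tauto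
    · intro x hx
      have mm1 := @map_sub_rem B D0 x
      clear * - hx mm1; simp only [Multiset.mem_add, Multiset.mem_cons] at *; tauto
    · intro x hx
      have mm1 := @map_sub_rem B G1 x
      have mm2 := @map_sub_rem B S1 x
      clear * - hx mm1 mm2; simp only [Multiset.mem_add, Multiset.mem_cons] at *; tauto
    · intro x hx; clear * - hx; simp only [Multiset.mem_add] at *; tauto
  by_cases hBa : B ∉ a0
  · by_cases hBD : B ∉ D0
    · exact .mod ok0 pL hG0 hS0 (map_sub_of_not_mem ha0 hBa) (map_sub_of_not_mem hD0 hBD)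
    · refine HM.mod (G := G0 + rem B G1 + rem B S1) (S := S0) (a := a0)
        (D := rem B D0 + a1 + D1) ?_ ?_ ?_ hS0 (map_sub_of_not_mem ha0 hBa) ?_
      · simp only [Multiset.card_add]
        exact okN_i hG ok0 ok1 (card_rem_lt (not_not.1 hBD)) (card_rem_le _ _) (card_rem_le _ _) hGS
      · refine step1.weak ?_ ?_ <;> intro x hx <;> clear * - hx <;>
          simp only [Multiset.mem_add, Multiset.map_add] at * <;> tauto
      · simp only [Multiset.map_add, addsub_iff]
        exact ⟨⟨hG0, map_rem_sub hG1⟩, map_rem_sub hS1⟩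
      · simp only [Multiset.map_add, addsub_iff]
        exact ⟨⟨map_rem_sub hD0, ha1⟩, hD1⟩
  rw [not_not] at hBa
  have hca : a0.card = 1 := by
    have := ok0.1
    have := Multiset.card_pos_iff_exists_mem.2 ⟨B, hBa⟩
    omega
  obtain rfl : a0 = {B} := by
    obtain ⟨b, rfl⟩ := Multiset.card_eq_one.1 hca
    rw [Multiset.mem_singleton] at hBa
    rw [hBa]
  -- step 2: cut the left conclusion against the right premiss
  have step2 : HM Ax (G0.map Fm.box + S0.map Fm.box + (rem B G1).map Fm.box + S1)
      (a1 + (rem B D0).map Fm.box + D1.map Fm.box) := by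
    refine ihR _ _ ?_ ?_ ?_ ?_
    · intro x hx; clear * - hx; simp only [Multiset.mem_add] at *; tauto
    · intro x hx
      have mm1 := @map_sub_rem B D0 x
      clear * - hx mm1; simp only [Multiset.mem_add, Multiset.mem_cons, Multiset.map_singleton,
        Multiset.mem_singleton] at *; tauto
    · intro x hx
      have mm1 := @map_sub_rem B G1 x
      clear * - hx mm1; simp only [Multiset.mem_add, Multiset.mem_cons] at *; tauto
    · intro x hx; clear * - hx; simp only [Multiset.mem_add] at *; tauto
  by_cases hBS : B ∉ S1
  · have hBG : B ∈ G1 := not_not.1 fun h => hR ⟨h, hBS⟩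
    refine HM.mod (G := G0 + S0 + rem B G1) (S := S1) (a := a1)
        (D := rem B D0 + D1) ?_ ?_ ?_ (map_sub_of_not_mem hS1 hBS) ha1 ?_
    · simp only [Multiset.card_add]
      exact okN_ii hG ok0 ok1 hca (card_rem_le _ _) (card_rem_lt hBG)
    · refine step2.weak ?_ ?_ <;> intro x hx <;> clear * - hx <;>
          simp only [Multiset.mem_add, Multiset.map_add] at * <;> tauto
    · simp only [Multiset.map_add, addsub_iff]
      exact ⟨⟨hG0, hS0⟩, map_rem_sub hG1⟩
    · simp only [Multiset.map_add, addsub_iff]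
      exact ⟨map_rem_sub hD0, hD1⟩
  rw [not_not] at hBS
  obtain ⟨X, Z, hXZ, hX, hZ, s1⟩ : ∃ X Z : Multiset Fm,
      (((rem B D0).card < D0.card ∧ X.card = (rem B S1).card ∧ Z.card = a1.card) ∨
        ((rem B D0).card = D0.card ∧ X.card = 0 ∧ Z.card = 0)) ∧
      X.map Fm.box ⊆ Γ' ∧ Z.map Fm.box ⊆ Δ' ∧
      HM Ax (G0.map Fm.box + S0 + (rem B G1).map Fm.box + X.map Fm.box)
        ({B} + (rem B D0).map Fm.box + Z.map Fm.box + D1.map Fm.box) := by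
    by_cases h : B ∈ D0
    · exact ⟨rem B S1, a1, .inl ⟨card_rem_lt h, rfl, rfl⟩, map_rem_sub hS1, ha1, step1⟩
    · refine ⟨0, 0, .inr ⟨by rw [rem_eq h], rfl, rfl⟩, by simp, by simp, pL.weak ?_ ?_⟩
      · intro x hx; clear * - hx; simp only [Multiset.mem_add] at *; tauto
      · intro x hx; rw [rem_eq h]; clear * - hx; simp only [Multiset.mem_add] at *; tauto
  obtain ⟨Y, hYc, hY, s2⟩ : ∃ Y : Multiset Fm,
      (((rem B G1).card < G1.card ∧ Y.card = S0.card) ∨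
        ((rem B G1).card = G1.card ∧ Y.card = 0)) ∧
      Y.map Fm.box ⊆ Γ' ∧
      HM Ax (G0.map Fm.box + Y.map Fm.box + (rem B G1).map Fm.box + S1)
        (a1 + (rem B D0).map Fm.box + D1.map Fm.box) := by
    by_cases h : B ∈ G1
    · exact ⟨S0, .inl ⟨card_rem_lt h, rfl⟩, hS0, step2⟩
    · refine ⟨0, .inr ⟨by rw [rem_eq h], rfl⟩, by simp, pR.weak ?_ ?_⟩
      · intro x hx; rw [rem_eq h]; clear * - hx; simp only [Multiset.mem_add] at *; tauto
      · intro x hx; clear * - hx; simp only [Multiset.mem_add] at *; tauto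
  refine HM.mod' (G := G0 + rem B G1 + X + Y) (S := S0 + rem B S1) (a := a1)
        (D := rem B D0 + D1 + Z) ?_ ?_ ?_ ?_ ha1 ?_
  · simp only [Multiset.card_add]
    exact okN_iii hG ok0 ok1 hca (card_rem_lt hBS) hXZ hYc
  · refine hB _ _ (s1.weak ?_ ?_) (s2.weak ?_ ?_)
    · intro x hx
      clear * - hx; simp only [Multiset.mem_add, Multiset.map_add] at *; tauto
    · intro x hx
      clear * - hx; simp only [Multiset.mem_add, Multiset.map_add, Multiset.mem_cons,
        Multiset.mem_singleton] at *; tauto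
    · intro x hx
      have mm1 := @sub_rem B S1 x
      clear * - hx mm1; simp only [Multiset.mem_add, Multiset.map_add, Multiset.mem_cons] at *; tauto
    · intro x hx
      clear * - hx; simp only [Multiset.mem_add, Multiset.map_add] at *; tauto
  · simp only [Multiset.map_add, addsub_iff]
    exact ⟨⟨⟨hG0, map_rem_sub hG1⟩, hX⟩, hY⟩
  · simp only [Multiset.map_add, addsub_iff]
    exact ⟨hS0, map_rem_sub hS1⟩
  · simp only [Multiset.map_add, addsub_iff]
    exact ⟨⟨map_rem_sub hD0, hD1⟩, hZ⟩

theorem HM.boxCut {Ax : MAx} (hG : Good Ax) {B : Fm} (hB : CutOk Ax B)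
    {Γ Δ : Multiset Fm} (h : HM Ax Γ Δ) :
    ∀ Sr Pr : Multiset Fm, HM Ax Sr Pr → ∀ Γ' Δ' : Multiset Fm,
      Γ ⊆ Γ' → Δ ⊆ Fm.box B ::ₘ Δ' → Sr ⊆ Fm.box B ::ₘ Γ' → Pr ⊆ Δ' → HM Ax Γ' Δ' := by
  have wk : ∀ (A : Fm) {X Y : Multiset Fm}, X ⊆ Fm.box B ::ₘ Y → X ⊆ Fm.box B ::ₘ A ::ₘ Y :=
    fun A X Y h => h.tr (sub_cons1 (sub_r fun _ h => h))
  induction h with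
  | init h1 h2 =>
    intro Sr Pr hr Γ' Δ' hΓ hΔ hX hY
    exact .init (hΓ h1) (mem_ne hΔ h2 (by simp))
  | botL h1 => intro Sr Pr hr Γ' Δ' hΓ hΔ hX hY; exact .botL (hΓ h1)
  | topR h1 => intro Sr Pr hr Γ' Δ' hΓ hΔ hX hY; exact .topR (mem_ne hΔ h1 (by simp))
  | negL h1 _ ih =>
    intro Sr Pr hr Γ' Δ' hΓ hΔ hX hY
    exact .negL (hΓ h1) (ih _ _ hr _ _ hΓ (sub_cons2 hΔ) hX (sub_r hY))
  | negR h1 _ ih =>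
    intro Sr Pr hr Γ' Δ' hΓ hΔ hX hY
    exact .negR (mem_ne hΔ h1 (by simp)) (ih _ _ hr _ _ (sub_cons1 hΓ) hΔ (wk _ hX) hY)
  | andL h1 _ ih =>
    intro Sr Pr hr Γ' Δ' hΓ hΔ hX hY
    exact .andL (hΓ h1) (ih _ _ hr _ _ (sub_cons1 (sub_cons1 hΓ)) hΔ
      (hX.tr (sub_cons1 (sub_r (sub_r fun _ h => h)))) hY)
  | andR h1 _ _ ih ih' =>
    intro Sr Pr hr Γ' Δ' hΓ hΔ hX hY
    exact .andR (mem_ne hΔ h1 (by simp)) (ih _ _ hr _ _ hΓ (sub_cons2 hΔ) hX (sub_r hY))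
      (ih' _ _ hr _ _ hΓ (sub_cons2 hΔ) hX (sub_r hY))
  | orL h1 _ _ ih ih' =>
    intro Sr Pr hr Γ' Δ' hΓ hΔ hX hY
    exact .orL (hΓ h1) (ih _ _ hr _ _ (sub_cons1 hΓ) hΔ (wk _ hX) hY)
      (ih' _ _ hr _ _ (sub_cons1 hΓ) hΔ (wk _ hX) hY)
  | orR h1 _ ih =>
    intro Sr Pr hr Γ' Δ' hΓ hΔ hX hY
    exact .orR (mem_ne hΔ h1 (by simp)) (ih _ _ hr _ _ hΓ ((sub_cons1 (sub_cons2 hΔ)).tr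
          (by rw [Multiset.cons_swap]; exact Multiset.Subset.refl _)) hX (sub_r (sub_r hY)))
  | impL h1 _ _ ih ih' =>
    intro Sr Pr hr Γ' Δ' hΓ hΔ hX hY
    exact .impL (hΓ h1) (ih _ _ hr _ _ (sub_cons1 hΓ) hΔ (wk _ hX) hY)
      (ih' _ _ hr _ _ hΓ (sub_cons2 hΔ) hX (sub_r hY))
  | impR h1 _ ih =>
    intro Sr Pr hr Γ' Δ' hΓ hΔ hX hY
    exact .impR (mem_ne hΔ h1 (by simp))
      (ih _ _ hr _ _ (sub_cons1 hΓ) (sub_cons2 hΔ) (wk _ hX) (sub_r hY))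
  | @mod _ _ G0 S0 a0 D0 ok0 pL a b c d ih =>
    intro Sr Pr hr Γ' Δ' hΓ hΔ hX hY
    refine HM.boxR (B := B) (Γl := G0.map Fm.box + S0.map Fm.box)
      (Δl := a0.map Fm.box + D0.map Fm.box) ?_ hr Γ' Δ'
      (addsub_iff.2 ⟨a.tr hΓ, b.tr hΓ⟩) (addsub_iff.2 ⟨c.tr hΔ, d.tr hΔ⟩) hX hY
    intro G1 S1 a1 D1 ok1 pR ihR Γ' Δ' hl hr h1 h2 h3 h4
    rw [addsub_iff] at hl hr
    exact HM.core hG hB ok0 ok1 pL pR ih ihR Γ' Δ' hl.1 hl.2 hr.1 hr.2 h1 h2 h3 h4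

theorem HM.invR' {Ax : MAx} {F : Fm} {X Y Γ Δ : Multiset Fm} (h : HM Ax Γ (F ::ₘ Δ))
    (hbox : ∀ B, F ≠ Fm.box B) (htop : F ≠ Fm.top)
    (hvar : ∀ m, F ≠ Fm.var m)
    (hneg : ∀ A, F = Fm.neg A → A ∈ X)
    (hand : ∀ A B, F = Fm.and A B → A ∈ Y ∨ B ∈ Y)
    (hor : ∀ A B, F = Fm.or A B → A ∈ Y ∧ B ∈ Y)
    (himp : ∀ A B, F = Fm.imp A B → A ∈ X ∧ B ∈ Y) : HM Ax (X + Γ) (Y + Δ) := by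
  refine HM.invR (X := X) (Y := Y) hbox htop (fun m e => absurd e (hvar m)) hneg hand hor himp h
    ?_ ?_ ?_ ?_ <;> intro x hx <;> simp only [Multiset.mem_add, Multiset.mem_cons] at * <;> tauto

theorem HM.invL' {Ax : MAx} {F : Fm} {X Y Γ Δ : Multiset Fm} (h : HM Ax (F ::ₘ Γ) Δ)
    (hbox : ∀ B, F ≠ Fm.box B) (hbot : F ≠ Fm.bot) (hvar : ∀ m, F ≠ Fm.var m)
    (hneg : ∀ A, F = Fm.neg A → A ∈ Y)
    (hand : ∀ A B, F = Fm.and A B → A ∈ X ∧ B ∈ X)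
    (hor : ∀ A B, F = Fm.or A B → A ∈ X ∨ B ∈ X)
    (himp : ∀ A B, F = Fm.imp A B → B ∈ X ∨ A ∈ Y) : HM Ax (X + Γ) (Y + Δ) := by
  refine HM.invL (X := X) (Y := Y) hbox hbot hvar hneg hand hor himp h
    ?_ ?_ ?_ ?_ <;> intro x hx <;> simp only [Multiset.mem_add, Multiset.mem_cons] at * <;> tauto

theorem HM.cut {Ax : MAx} (hG : Good Ax) (A : Fm) : CutOk Ax A := by
  induction A with
  | var m =>
    intro Γ Δ h1 h2
    refine HM.invR (F := .var m) (X := Γ) (Y := Δ) (by simp) (by simp) ?_ (by simp) (by simp)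
      (by simp) (by simp) h1 (Multiset.Subset.refl _) (Multiset.Subset.refl _)
      (Multiset.Subset.refl _) (Multiset.Subset.refl _)
    intro k e Γ' Δ' hX hY hm
    cases e
    exact h2.weak (Multiset.cons_subset.2 ⟨hm, hX⟩) hY
  | bot =>
    intro Γ Δ h1 h2
    simpa using HM.invR' (X := 0) (Y := 0) h1 (by simp) (by simp) (by simp) (by simp) (by simp)
      (by simp) (by simp)
  | top =>
    intro Γ Δ h1 h2
    simpa using HM.invL' (X := 0) (Y := 0) h2 (by simp) (by simp) (by simp) (by simp) (by simp)
      (by simp) (by simp)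
  | neg A ih =>
    intro Γ Δ h1 h2
    have l := HM.invR' (X := {A}) (Y := 0) h1 (by simp) (by simp) (by simp) (by simp) (by simp)
      (by simp) (by simp)
    have r := HM.invL' (X := 0) (Y := {A}) h2 (by simp) (by simp) (by simp) (by simp) (by simp)
      (by simp) (by simp)
    exact ih _ _ (by simpa using r) (by simpa using l)
  | and A B ihA ihB =>
    intro Γ Δ h1 h2
    have l := HM.invR' (X := 0) (Y := {A}) h1 (by simp) (by simp) (by simp) (by simp) (by simp)
      (by simp) (by simp)
    have l' := HM.invR' (X := 0) (Y := {B}) h1 (by simp) (by simp) (by simp) (by simp) (by simp)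
      (by simp) (by simp)
    have r := HM.invL' (X := A ::ₘ {B}) (Y := 0) h2 (by simp) (by simp) (by simp) (by simp)
      (by simp) (by simp) (by simp)
    simp only [zero_add, Multiset.singleton_add, Multiset.cons_add] at l l' r
    exact ihB _ _ l' (ihA _ _ (l.weak (sub_r fun _ h => h) fun _ h => h) r)
  | or A B ihA ihB =>
    intro Γ Δ h1 h2
    have l := HM.invL' (X := {A}) (Y := 0) h2 (by simp) (by simp) (by simp) (by simp) (by simp)
      (by simp) (by simp)
    have l' := HM.invL' (X := {B}) (Y := 0) h2 (by simp) (by simp) (by simp) (by simp) (by simp)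
      (by simp) (by simp)
    have r := HM.invR' (X := 0) (Y := A ::ₘ {B}) h1 (by simp) (by simp) (by simp) (by simp)
      (by simp) (by simp) (by simp)
    simp only [zero_add, Multiset.singleton_add, Multiset.cons_add] at l l' r
    exact ihB _ _ (ihA _ _ r (l.weak (fun _ h => h) (sub_r fun _ h => h))) l'
  | imp A B ihA ihB =>
    intro Γ Δ h1 h2
    have l := HM.invL' (X := {B}) (Y := 0) h2 (by simp) (by simp) (by simp) (by simp) (by simp)
      (by simp) (by simp)
    have l' := HM.invL' (X := 0) (Y := {A}) h2 (by simp) (by simp) (by simp) (by simp) (by simp)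
      (by simp) (by simp)
    have r := HM.invR' (X := {A}) (Y := {B}) h1 (by simp) (by simp) (by simp) (by simp)
      (by simp) (by simp) (by simp)
    simp only [zero_add, Multiset.singleton_add, Multiset.cons_add] at l l' r
    exact ihA _ _ l' (ihB _ _ r (l.weak (sub_cons1 (sub_r fun _ h => h)) (fun _ h => h)))
  | box B ih =>
    intro Γ Δ h1 h2
    exact HM.boxCut hG ih h1 _ _ h2 _ _ (Multiset.Subset.refl _) (Multiset.Subset.refl _)
      (Multiset.Subset.refl _) (Multiset.Subset.refl _)

/-! ### From the auxiliary calculus to the frozen one -/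

theorem GM.wkLs {Ax : MAx} {cut : Bool} {Γ Δ : Multiset Fm} (h : GM Ax cut Γ Δ)
    (X : Multiset Fm) : GM Ax cut (X + Γ) Δ := by
  induction X using Multiset.induction_on with
  | empty => simpa using h
  | cons a X ih => rw [Multiset.cons_add]; exact .wkL ih

theorem GM.wkRs {Ax : MAx} {cut : Bool} {Γ Δ : Multiset Fm} (h : GM Ax cut Γ Δ)
    (X : Multiset Fm) : GM Ax cut Γ (X + Δ) := by
  induction X using Multiset.induction_on with
  | empty => simpa using h
  | cons a X ih => rw [Multiset.cons_add]; exact .wkR ih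

theorem GM.conLs {Ax : MAx} {cut : Bool} {Γ Δ : Multiset Fm} (X : Multiset Fm) :
    X ⊆ Γ → GM Ax cut (X + Γ) Δ → GM Ax cut Γ Δ := by
  induction X using Multiset.induction_on with
  | empty => intro _ h; simpa using h
  | cons a X ih =>
    intro hs h
    rw [Multiset.cons_subset] at hs
    refine ih hs.2 ?_
    obtain ⟨Γ'', rfl⟩ := Multiset.exists_cons_of_mem hs.1
    rw [Multiset.add_cons]
    refine .conL ?_
    simpa [Multiset.cons_add, Multiset.add_cons] using h

theorem GM.conRs {Ax : MAx} {cut : Bool} {Γ Δ : Multiset Fm} (X : Multiset Fm) :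
    X ⊆ Δ → GM Ax cut Γ (X + Δ) → GM Ax cut Γ Δ := by
  induction X using Multiset.induction_on with
  | empty => intro _ h; simpa using h
  | cons a X ih =>
    intro hs h
    rw [Multiset.cons_subset] at hs
    refine ih hs.2 ?_
    obtain ⟨Γ'', rfl⟩ := Multiset.exists_cons_of_mem hs.1
    rw [Multiset.add_cons]
    refine .conR ?_
    simpa [Multiset.cons_add, Multiset.add_cons] using h

theorem GM.sub {Ax : MAx} {cut : Bool} {Γ Δ Γ' Δ' : Multiset Fm} (h : GM Ax cut Γ Δ)
    (h1 : Γ ⊆ Γ') (h2 : Δ ⊆ Δ') : GM Ax cut Γ' Δ' := by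
  refine GM.conLs Γ h1 (GM.conRs Δ h2 ?_)
  have := (h.wkLs Γ').wkRs Δ'
  rwa [add_comm Γ', add_comm Δ'] at this

theorem pairA (E A : Fm) : Multiset.map Fm.box {E} + {A} ⊆ {A, Fm.box E} := by
  intro x; simp; tauto

theorem pairB (E A : Fm) : ({Fm.box A, Fm.box E} : Multiset Fm) ⊆
    Multiset.map Fm.box {E} + Multiset.map Fm.box {A} := by
  intro x; simp; tauto

theorem GM.modal {Ax : MAx} (hG : Good Ax) {cut : Bool} {G S a D : Multiset Fm}
    (ok : OkN Ax G.card S.card a.card D.card)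
    (h : GM Ax cut (G.map Fm.box + S) (a + D.map Fm.box)) :
    GM Ax cut (G.map Fm.box + S.map Fm.box) (a.map Fm.box + D.map Fm.box) := by
  obtain ⟨ha1, hne, h4, h5, hn, hpd, hc⟩ := ok
  by_cases hcc : Ax.c = true
  · by_cases h5t : Ax.five = true
    · obtain ⟨hn', h4'⟩ := (hG.2 h5t).1 hcc
      rcases Nat.le_one_iff_eq_zero_or_eq_one.1 ha1 with ha | ha
      · have hpd' := hpd ha
        rw [Multiset.card_eq_zero] at ha
        subst ha
        simp only [Multiset.map_zero, zero_add] at h ⊢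
        exact .ruleKD45 hcc hn' h4' h5t hpd' h
      · obtain ⟨A, rfl⟩ := Multiset.card_eq_one.1 ha
        simp only [Multiset.map_singleton, Multiset.singleton_add] at h ⊢
        exact .ruleK45 hcc hn' h4' h5t h
    · obtain rfl : D = 0 := Multiset.card_eq_zero.1 (not_not.1 fun e => h5t (h5 e))
      simp only [Multiset.map_zero, add_zero] at h ⊢
      by_cases h4t : Ax.four = true
      · rcases Nat.le_one_iff_eq_zero_or_eq_one.1 ha1 with ha | ha
        · have hpd' := hpd ha
          rw [Multiset.card_eq_zero] at ha
          subst ha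
          exact .ruleCD4 hcc h4t hpd' h
        · obtain ⟨A, rfl⟩ := Multiset.card_eq_one.1 ha
          by_cases hGS : G + S = 0
          · have hN := hn (by simp) (by rw [← Multiset.card_add, hGS]; rfl)
            obtain ⟨rfl, rfl⟩ := add_eq_zero.1 hGS
            exact .ruleN hN h
          · exact .ruleC4 hcc h4t hGS h
      · obtain rfl : G = 0 := Multiset.card_eq_zero.1 (not_not.1 fun e => h4t (h4 e))
        simp only [Multiset.map_zero, zero_add] at h ⊢
        rcases Nat.le_one_iff_eq_zero_or_eq_one.1 ha1 with ha | ha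
        · have hpd' := hpd ha
          rw [Multiset.card_eq_zero] at ha
          subst ha
          exact .ruleCD hcc hpd' h
        · obtain ⟨A, rfl⟩ := Multiset.card_eq_one.1 ha
          by_cases hS : S = 0
          · subst hS
            exact .ruleN (hn (by simp) (by simp)) h
          · exact .ruleC hcc hS h
  · have hcf : Ax.c = false := by simpa using hcc
    obtain ⟨hw, hd, hgd, hdd⟩ := hc hcf
    rcases Nat.le_one_iff_eq_zero_or_eq_one.1 ha1 with ha | ha
    · have hpd' := hpd ha
      have hd' := hd ha
      have hgd' := hgd ha
      have hdd' := hdd ha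
      rw [ha] at hw hne
      rw [Multiset.card_eq_zero] at ha
      subst ha
      by_cases hS2 : S.card = 2
      · have hG0 : G.card = 0 := by omega
        have hD0 : D.card = 0 := by omega
        rw [Multiset.card_eq_zero] at hG0 hD0
        subst hG0 hD0
        obtain ⟨A, B, rfl⟩ := Multiset.card_eq_two.1 hS2
        simpa using GM.ruleD (hd' hS2) (by simpa using h)
      · have hS1 : S.card = 1 := by omega
        obtain ⟨A, rfl⟩ := Multiset.card_eq_one.1 hS1
        by_cases hG1 : G.card = 0
        · rw [Multiset.card_eq_zero] at hG1
          subst hG1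
          by_cases hD1 : D.card = 0
          · rw [Multiset.card_eq_zero] at hD1
            subst hD1
            simp only [Multiset.map_zero, add_zero, zero_add, Multiset.map_singleton] at h ⊢
            rcases hpd' with hp | hd1
            · exact .ruleP hp h
            · exact .conL (Γ := 0) (.ruleD hd1 (.wkL h))
          · have hD1' : D.card = 1 := by simp at hw; omega
            obtain ⟨E, rfl⟩ := Multiset.card_eq_one.1 hD1'
            simpa using GM.ruleD5 hcf (h5 hD1) (hdd' hD1) (by simpa using h)
        · have hG1' : G.card = 1 := by simp at hw; omega
          have hD0 : D.card = 0 := by simp at hw; omega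
          rw [Multiset.card_eq_zero] at hD0
          subst hD0
          obtain ⟨E, rfl⟩ := Multiset.card_eq_one.1 hG1'
          have h' : GM Ax cut {A, Fm.box E} 0 := h.sub (pairA E A) (by simp)
          exact (GM.ruleD4 hcf (h4 hG1) (hgd' hG1) h').sub (pairB E A) (by simp)
    · rw [ha] at hw
      obtain ⟨A, rfl⟩ := Multiset.card_eq_one.1 ha
      by_cases hD1 : D.card = 0
      · rw [Multiset.card_eq_zero] at hD1
        subst hD1
        by_cases hG1 : G.card = 0
        · rw [Multiset.card_eq_zero] at hG1
          subst hG1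
          by_cases hS1 : S.card = 0
          · have := hn (by simp) (by simp [hS1])
            rw [Multiset.card_eq_zero] at hS1
            subst hS1
            exact .ruleN this h
          · have hS1' : S.card = 1 := by simp at hw; omega
            obtain ⟨E, rfl⟩ := Multiset.card_eq_one.1 hS1'
            simpa using GM.ruleM hcf (by simpa using h)
        · have hG1' : G.card = 1 := by simp at hw; omega
          have hS0 : S.card = 0 := by simp at hw; omega
          rw [Multiset.card_eq_zero] at hS0
          subst hS0
          obtain ⟨E, rfl⟩ := Multiset.card_eq_one.1 hG1'
          simpa using GM.rule4 (h4 hG1) (by simpa using h)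
      · have hD1' : D.card = 1 := by omega
        have hG0 : G.card = 0 := by omega
        have hS0 : S.card = 0 := by omega
        rw [Multiset.card_eq_zero] at hG0 hS0
        subst hG0 hS0
        obtain ⟨E, rfl⟩ := Multiset.card_eq_one.1 hD1'
        exact GM.rule5 (h5 hD1) h

theorem HM.toGM {Ax : MAx} (hG : Good Ax) {Γ Δ : Multiset Fm} (h : HM Ax Γ Δ) :
    GM Ax false Γ Δ := by
  have cs : ∀ {A : Fm} {X : Multiset Fm}, A ∈ X → A ::ₘ X ⊆ X :=
    fun h => Multiset.cons_subset.2 ⟨h, Multiset.Subset.refl _⟩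
  have rf : ∀ {X : Multiset Fm}, X ⊆ X := fun {X} => Multiset.Subset.refl X
  induction h with
  | init h1 h2 => exact GM.init.sub (cs h1) (cs h2)
  | botL h1 => exact (GM.botL (Δ := 0)).sub (cs h1) (by simp)
  | topR h1 => exact (GM.topR (Γ := 0)).sub (by simp) (cs h1)
  | negL h1 _ ih => exact (GM.negL ih).sub (cs h1) rf
  | negR h1 _ ih => exact (GM.negR ih).sub rf (cs h1)
  | andL h1 _ ih => exact (GM.andL ih).sub (cs h1) rf
  | andR h1 _ _ ih ih' => exact (GM.andR ih ih').sub rf (cs h1)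
  | orL h1 _ _ ih ih' => exact (GM.orL ih ih').sub (cs h1) rf
  | orR h1 _ ih => exact (GM.orR ih).sub rf (cs h1)
  | impL h1 _ _ ih ih' => exact (GM.impL ih ih').sub (cs h1) rf
  | impR h1 _ ih => exact (GM.impR ih).sub rf (cs h1)
  | mod ok p a b c d ih =>
    exact (GM.modal hG ok ih).sub (addsub_iff.2 ⟨a, b⟩) (addsub_iff.2 ⟨c, d⟩)

theorem HM.modx {Ax : MAx} {Γ Δ Γp Δp : Multiset Fm} (G S a D : Multiset Fm)
    (p : HM Ax Γp Δp)
    (ok : (S.card = 0 ∧ a.card = 0) ∨ OkN Ax G.card S.card a.card D.card)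
    (e1 : Γp ⊆ G.map Fm.box + S) (e2 : Δp ⊆ a + D.map Fm.box)
    (e3 : G.map Fm.box + S.map Fm.box ⊆ Γ) (e4 : a.map Fm.box + D.map Fm.box ⊆ Δ) :
    HM Ax Γ Δ :=
  HM.mod' ok (p.weak e1 e2) (addsub_iff.1 e3).1 (addsub_iff.1 e3).2 (addsub_iff.1 e4).1 (addsub_iff.1 e4).2

theorem GM.toHM {Ax : MAx} (hG : Good Ax) {Γ Δ : Multiset Fm} (h : GM Ax true Γ Δ) :
    HM Ax Γ Δ := by
  have rf : ∀ {X : Multiset Fm}, X ⊆ X := fun {X} => Multiset.Subset.refl X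
  have sr : ∀ {A : Fm} {X : Multiset Fm}, X ⊆ A ::ₘ X := fun {A X} => sub_r rf
  induction h with
  | init => exact .init (Multiset.mem_cons_self _ _) (Multiset.mem_cons_self _ _)
  | botL => exact .botL (Multiset.mem_cons_self _ _)
  | topR => exact .topR (Multiset.mem_cons_self _ _)
  | negL _ ih => exact .negL (Multiset.mem_cons_self _ _) (ih.weak sr rf)
  | negR _ ih => exact .negR (Multiset.mem_cons_self _ _) (ih.weak rf sr)
  | andL _ ih =>
    exact .andL (Multiset.mem_cons_self _ _) (ih.weak (sub_cons1 (sub_cons1 sr)) rf)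
  | andR _ _ ih ih' =>
    exact .andR (Multiset.mem_cons_self _ _) (ih.weak rf (sub_cons1 sr)) (ih'.weak rf (sub_cons1 sr))
  | orL _ _ ih ih' =>
    exact .orL (Multiset.mem_cons_self _ _) (ih.weak (sub_cons1 sr) rf) (ih'.weak (sub_cons1 sr) rf)
  | orR _ ih =>
    exact .orR (Multiset.mem_cons_self _ _) (ih.weak rf (sub_cons1 (sub_cons1 sr)))
  | impL _ _ ih ih' =>
    exact .impL (Multiset.mem_cons_self _ _) (ih.weak (sub_cons1 sr) rf) (ih'.weak sr rf)
  | impR _ ih =>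
    exact .impR (Multiset.mem_cons_self _ _) (ih.weak rf (sub_cons1 sr))
  | wkL _ ih => exact ih.weak sr rf
  | wkR _ ih => exact ih.weak rf sr
  | conL _ ih => exact ih.weak (Multiset.cons_subset.2 ⟨Multiset.mem_cons_self _ _, rf⟩) rf
  | conR _ ih => exact ih.weak rf (Multiset.cons_subset.2 ⟨Multiset.mem_cons_self _ _, rf⟩)
  | @ruleM A B hc _ ih =>
    exact HM.modx 0 {A} {B} 0 ih (.inr (by simp [OkN])) (by simp) (by simp) (by simp) (by simp)
  | @ruleC Γ A hc hne _ ih =>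
    exact HM.modx 0 Γ {A} 0 ih (.inr (by simp [OkN, hc, hne])) (by simp) (by simp) (by simp)
      (by simp)
  | @ruleN A hn _ ih =>
    exact HM.modx 0 0 {A} 0 ih (.inr (by simp [OkN, hn])) (by simp) (by simp) (by simp) (by simp)
  | @ruleP A hp _ ih =>
    exact HM.modx 0 {A} 0 0 ih (.inr (by simp [OkN, hp])) (by simp) (by simp) (by simp) (by simp)
  | @ruleD A B hd _ ih =>
    exact HM.modx 0 {A, B} 0 0 ih (.inr (by simp [OkN, hd])) (by simp) (by simp) (by simp) (by simp)
  | ruleT ht => exact absurd ht (by simp [hG.1])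
  | @rule4 A B h4 _ ih =>
    exact HM.modx {A} 0 {B} 0 ih (.inr (by simp [OkN, h4])) (by simp) (by simp) (by simp) (by simp)
  | @rule5 A B h5 _ ih =>
    exact HM.modx 0 0 {A} {B} ih (.inr (by simp [OkN, h5])) (by simp) (by simp) (by simp) (by simp)
  | @ruleD4 A B hc h4 hh _ ih =>
    exact HM.modx {B} {A} 0 0 ih (.inr (by simp [OkN, h4, hh]; tauto))
      (by intro x; simp; tauto) (by simp) (by intro x; simp; tauto) (by simp)
  | @ruleD5 A B hc h5 hh _ ih =>
    exact HM.modx 0 {A} 0 {B} ih (.inr (by simp [OkN, h5, hh]; tauto))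
      (by simp) (by simp) (by simp) (by simp)
  | @ruleCD Γ hc hpd _ ih =>
    refine HM.modx 0 Γ 0 0 ih ?_ (by simp) (by simp) (by simp) (by simp)
    by_cases e : Γ = 0 <;> simp [OkN, hc, hpd, e]
  | @ruleC4 Γ Sg B hc h4 hne _ ih =>
    refine HM.modx Γ Sg {B} 0 ih (.inr ?_) (by simp) (by simp) (by simp) (by simp)
    refine ⟨by simp, by simp, fun _ => h4, by simp, ?_, by simp, by simp [hc]⟩
    intro _ e
    rw [← Multiset.card_add, Multiset.card_eq_zero] at e
    exact absurd e hne
  | @ruleCD4 Γ Sg hc h4 hpd _ ih =>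
    refine HM.modx Γ Sg 0 0 ih ?_ (by simp) (by simp) (by simp) (by simp)
    by_cases e : Sg = 0 <;> simp [OkN, hc, hpd, h4, e]
  | @ruleK4 Γ Sg A hc hn h4 _ ih =>
    exact HM.modx Γ Sg {A} 0 ih (.inr (by simp [OkN, hc, hn, h4])) (by simp) (by simp) (by simp)
      (by simp)
  | @ruleK45 Γ Sg D A hc hn h4 h5 _ ih =>
    exact HM.modx Γ Sg {A} D ih (.inr (by simp [OkN, hc, hn, h4, h5])) (by simp) (by simp)
      (by simp) (by simp)
  | @ruleKD45 Γ Sg D hc hn h4 h5 hpd _ ih =>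
    refine HM.modx Γ Sg 0 D ih ?_ (by simp) (by simp) (by simp) (by simp)
    by_cases e : Sg = 0 <;> simp [OkN, hc, hpd, h4, h5, e]
  | @mcut _ _ _ _ A _ _ _ _ _ _ _ ih1 ih2 =>
    refine HM.cut hG A _ _ (ih1.weak ?_ ?_) (ih2.weak ?_ ?_)
    · intro x; simp only [Multiset.mem_add]; tauto
    · intro x; simp only [Multiset.mem_add, Multiset.mem_cons, Multiset.mem_replicate]; tauto
    · intro x; simp only [Multiset.mem_add, Multiset.mem_cons, Multiset.mem_replicate]; tauto
    · intro x; simp only [Multiset.mem_add]; tauto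

/-- Elimination of the multicut rule: for `L` the logic `M𝒜` with
`𝒜 ⊆ {N, C, P, D, 4}` or one of `M5, MP5, M45, MP45, MD45, K45, KD45`, every
derivation in `G_LConW` extended with the multicut rule can be converted into
a derivation in `G_LConW` (without multicut) with the same endsequent. -/
theorem multicut_elimination (Ax : MAx)
    (hL : (Ax.t = false ∧ Ax.five = false) ∨
      Ax ∈ [axM5, axMP5, axM45, axMP45, axMD45, axK45, axKD45]) :
    ∀ Γ Δ : Multiset Fm, GM Ax true Γ Δ → GM Ax false Γ Δ := by
  intro Γ Δ h
  have hG : Good Ax := by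
    rcases hL with ⟨ht, h5⟩ | hL
    · exact ⟨ht, fun h => absurd h (by simp [h5])⟩
    · simp only [List.mem_cons, List.not_mem_nil, or_false] at hL
      rcases hL with rfl | rfl | rfl | rfl | rfl | rfl | rfl <;>
        simp [Good, axM5, axMP5, axM45, axMP45, axMD45, axK45, axKD45]
  exact (GM.toHM hG h).toGM hG
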